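/- Let m be a positive integer, v ∈ F^n, and M ∈ F[X,Y] with residue class μ in R. Let t = #{i : 1 ≤ i ≤ n, M(P_i) ≠ v_i} (the Hamming distance between v and ev(μ)). Then the F-vector space F[X,Y,Z]/(⟨X^{q+1} − Y^q − Y⟩ + ⟨Z − H_v, X^{q²} − X⟩^m + ⟨Z − M⟩) has dimension m(n − t). -/

import Mathlib

open MvPolynomial

/-- The polynomial `H_i ∈ F[X,Y]` attached to the rational point `(α, β)` of the Hermitian
curve: `H = −∏_{a ∈ F, a ≠ α} (X − a) · ∏_{b ∈ F, b ≠ β, b^q + b = β^q + β} (Y − b)`. -/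
noncomputable def Hpoly (q : ℕ) {F : Type*} [Field F] [Fintype F] [DecidableEq F]
    (α β : F) : MvPolynomial (Fin 2) F :=
  -((∏ a ∈ Finset.univ.erase α, (X 0 - C a)) *
    ∏ b ∈ (Finset.univ.filter fun b : F => b ^ q + b = β ^ q + β).erase β, (X 1 - C b))

/-!
Let `A` be the coordinate ring of the Hermitian curve and `u = X ^ (q ^ 2) - X` in `A`. Setting
`Z = M` turns the quotient in question into `A / (f, u) ^ m` with `f = M - H_v`. Since `A` is free
over `F[X]`, `u` is a nonzerodivisor. As the curve has exactly `q` rational points over each of the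
`q ^ 2` values of `X`, `u` generates the kernel of evaluation at the rational points; this
evaluation is onto, because the `H_i` evaluate to the standard basis. Hence `I = (f, u)` is the
ideal of the rational points where `M` takes the value prescribed by `v`; with `J` the ideal of the
remaining ones, `I` and `J` are coprime and `I * J = (u)`. Multiplication by `u ^ n` then identifies
`A / I` with `I ^ n / I ^ (n + 1)`, so `A / I ^ m` has dimension `m` times that of `A / I`.
-/

section CoprimeFactors

variable {R : Type*} [CommRing R] {I J : Ideal R} {u : R}

lemma pow_eq_pow_succ_sup_span_pow (hIJ : IsCoprime I J) (hu : I * J = Ideal.span {u}) (n : ℕ) :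
    I ^ n = I ^ (n + 1) ⊔ Ideal.span {u ^ n} :=
  calc I ^ n = I ^ n * (I ⊔ J ^ n) := by
        rw [Ideal.isCoprime_iff_sup_eq.1 hIJ.pow_right, Ideal.mul_top]
    _ = I ^ (n + 1) ⊔ Ideal.span {u ^ n} := by
        rw [Ideal.mul_sup, ← pow_succ, ← mul_pow, hu, Ideal.span_singleton_pow]

-- After multiplication by an element of `J ^ (n + 1)` congruent to `1` modulo `I`, a relation in
-- `I ^ (n + 1)` becomes one in `(I * J) ^ (n + 1)`, where `u ^ n` can be cancelled.
lemma mul_pow_mem_pow_succ_iff (hIJ : IsCoprime I J) (hu : I * J = Ideal.span {u})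
    (hreg : IsLeftRegular u) (n : ℕ) (a : R) : u ^ n * a ∈ I ^ (n + 1) ↔ a ∈ I := by
  have u_mem : u ∈ I := Ideal.mul_le_left (hu ▸ Ideal.mem_span_singleton_self u)
  refine ⟨fun h => ?_, fun ha => pow_succ I n ▸ Ideal.mul_mem_mul (Ideal.pow_mem_pow u_mem n) ha⟩
  obtain ⟨x, hx, y, hy, hxy⟩ := Ideal.isCoprime_iff_exists.1 (hIJ.pow_right (n := n + 1))
  have mem_span : u ^ n * a * y ∈ Ideal.span {u ^ (n + 1)} := by
    rw [← Ideal.span_singleton_pow, ← hu, mul_pow]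
    exact Ideal.mul_mem_mul h hy
  obtain ⟨c, hc⟩ := Ideal.mem_span_singleton.1 mem_span
  have hay : a * y = u * c := hreg.pow n (by linear_combination hc)
  have decomp : a = a * x + u * c := by linear_combination -a * hxy + hay
  rw [decomp]
  exact I.add_mem (I.mul_mem_left a hx) (I.mul_mem_right c u_mem)

variable (k : Type*) [CommRing k] [Algebra k R]

-- Multiplication by `u ^ n` identifies `R ⧸ I` with `I ^ n ⧸ I ^ (n + 1)`.
lemma length_quotient_pow_succ (hIJ : IsCoprime I J) (hu : I * J = Ideal.span {u})
    (hreg : IsLeftRegular u) (n : ℕ) :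
    Module.length k (R ⧸ I ^ (n + 1)) =
      Module.length k (R ⧸ I) + Module.length k (R ⧸ I ^ n) := by
  let mulPow : (R ⧸ I) →ₗ[R] (R ⧸ I ^ (n + 1)) :=
    Submodule.mapQ I (I ^ (n + 1)) (LinearMap.mulLeft R (u ^ n)) fun a ha =>
      (mul_pow_mem_pow_succ_iff hIJ hu hreg n a).2 ha
  have pow_le : I ^ (n + 1) ≤ I ^ n := Ideal.pow_le_pow_right n.le_succ
  let proj := Ideal.Quotient.factorₐ k pow_le
  refine Module.length_eq_add_of_exact (mulPow.restrictScalars k) proj.toLinearMap ?_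
    (Ideal.Quotient.factor_surjective pow_le) ?_
  · refine (injective_iff_map_eq_zero mulPow).2 fun x hx => ?_
    obtain ⟨a, rfl⟩ := Ideal.Quotient.mk_surjective x
    rw [Ideal.Quotient.eq_zero_iff_mem, ← mul_pow_mem_pow_succ_iff hIJ hu hreg n]
    exact Ideal.Quotient.eq_zero_iff_mem.1 hx
  · intro x
    obtain ⟨a, rfl⟩ := Ideal.Quotient.mk_surjective x
    have proj_eq_zero : proj (Ideal.Quotient.mk _ a) = 0 ↔ a ∈ I ^ n :=
      Ideal.Quotient.eq_zero_iff_mem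
    refine proj_eq_zero.trans ⟨fun ha => ?_, ?_⟩
    · rw [pow_eq_pow_succ_sup_span_pow hIJ hu n] at ha
      obtain ⟨y, hy, z, hz, rfl⟩ := Submodule.mem_sup.1 ha
      obtain ⟨c, rfl⟩ := Ideal.mem_span_singleton.1 hz
      refine ⟨Ideal.Quotient.mk I c, Ideal.Quotient.eq.2 ?_⟩
      simpa using hy
    · rintro ⟨c, hc⟩
      obtain ⟨c, rfl⟩ := Ideal.Quotient.mk_surjective c
      have diff_mem : u ^ n * c - a ∈ I ^ n := pow_le (Ideal.Quotient.eq.1 hc)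
      have pow_mem : u ^ n ∈ I ^ n := by
        rw [pow_eq_pow_succ_sup_span_pow hIJ hu n]
        exact Ideal.mem_sup_right (Ideal.mem_span_singleton_self _)
      simpa using (I ^ n).sub_mem ((I ^ n).mul_mem_right c pow_mem) diff_mem

lemma length_quotient_pow (hIJ : IsCoprime I J) (hu : I * J = Ideal.span {u})
    (hreg : IsLeftRegular u) (m : ℕ) :
    Module.length k (R ⧸ I ^ m) = m * Module.length k (R ⧸ I) := by
  induction m with
  | zero =>
    have : Subsingleton (R ⧸ I ^ 0) := Ideal.Quotient.subsingleton_iff.2 <| by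
      rw [pow_zero, Ideal.one_eq_top]
    simp [Module.length_eq_zero]
  | succ n ih =>
    rw [length_quotient_pow_succ k hIJ hu hreg, ih, Nat.cast_succ, add_mul, one_mul, add_comm]

end CoprimeFactors

lemma toNat_length_eq_finrank (F V : Type*) [DivisionRing F] [AddCommGroup V] [Module F V] :
    (Module.length F V).toNat = Module.finrank F V := by
  rw [Module.length_eq_rank, Module.finrank, Cardinal.toNat_toENat]

section FiniteEvaluation

variable {k R ι : Type*} [CommRing k] [CommRing R] [Algebra k R]

/-- The evaluation map `ev`, whose values are functions on a set `ι` of points, restricted to the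
points of `s`. Its kernel is the ideal of elements of `R` vanishing on `s`. -/
def restrictEval (ev : R →ₐ[k] (ι → k)) (s : Set ι) : R →ₐ[k] (s → k) :=
  AlgHom.pi fun i => (Pi.evalAlgHom k (fun _ => k) i.1).comp ev

variable {ev : R →ₐ[k] (ι → k)}

lemma mem_ker_restrictEval {s : Set ι} {x : R} :
    x ∈ RingHom.ker (restrictEval ev s) ↔ ∀ i ∈ s, ev x i = 0 := by
  rw [RingHom.mem_ker, funext_iff, Subtype.forall]
  rfl

lemma restrictEval_surjective (hev : Function.Surjective ev) (s : Set ι) :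
    Function.Surjective (restrictEval ev s) :=
  (Subtype.val_injective.surjective_comp_right).comp hev

lemma isCoprime_ker_restrictEval_compl (hev : Function.Surjective ev) (s : Set ι) :
    IsCoprime (RingHom.ker (restrictEval ev s)) (RingHom.ker (restrictEval ev sᶜ)) := by
  obtain ⟨e, he⟩ := hev (s.indicator 1)
  refine Ideal.isCoprime_iff_exists.2 ⟨1 - e, ?_, e, ?_, sub_add_cancel 1 e⟩
  · exact mem_ker_restrictEval.2 fun i hi => by simp [he, hi]
  · exact mem_ker_restrictEval.2 fun i hi => by rw [he, Set.indicator_of_notMem hi]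

lemma ker_restrictEval_inf_compl (s : Set ι) :
    RingHom.ker (restrictEval ev s) ⊓ RingHom.ker (restrictEval ev sᶜ) = RingHom.ker ev := by
  ext x
  rw [Ideal.mem_inf, mem_ker_restrictEval, mem_ker_restrictEval, RingHom.mem_ker, funext_iff]
  exact ⟨fun h i => (em (i ∈ s)).elim (h.1 i) (h.2 i), fun h => ⟨fun i _ => h i, fun i _ => h i⟩⟩

variable {F : Type*} [Field F] [Algebra F R] {ev : R →ₐ[F] (ι → F)}

lemma ker_restrictEval_zeros (hev : Function.Surjective ev) {u : R}
    (hker : RingHom.ker ev = Ideal.span {u}) (f : R) :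
    RingHom.ker (restrictEval ev {i | ev f i = 0}) = Ideal.span {f, u} := by
  have hu : ev u = 0 := RingHom.mem_ker.1 (hker ▸ Ideal.mem_span_singleton_self u)
  refine le_antisymm (fun x hx => ?_) (Ideal.span_le.2 ?_)
  · obtain ⟨g, hg⟩ := hev fun i => (ev f i)⁻¹
    have sub_mem : x - x * g * f ∈ Ideal.span {u} := by
      rw [← hker, RingHom.mem_ker]
      ext i
      rcases eq_or_ne (ev f i) 0 with hi | hi
      · simp [hi, mem_ker_restrictEval.1 hx i hi]
      · simp [hg, hi]
    obtain ⟨c, hc⟩ := Ideal.mem_span_singleton.1 sub_mem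
    exact Ideal.mem_span_pair.2 ⟨x * g, c, by linear_combination -hc⟩
  · rintro _ (rfl | rfl)
    · exact mem_ker_restrictEval.2 fun i hi => hi
    · exact mem_ker_restrictEval.2 fun i _ => congrFun hu i

lemma finrank_quotient_ker_restrictEval [Finite ι] (hev : Function.Surjective ev) (s : Set ι) :
    Module.finrank F (R ⧸ RingHom.ker (restrictEval ev s)) = s.ncard := by
  have := Fintype.ofFinite s
  rw [(Ideal.quotientKerAlgEquivOfSurjective
      (restrictEval_surjective hev s)).toLinearEquiv.finrank_eq, Module.finrank_pi,
    Fintype.card_eq_nat_card, Nat.card_coe_set_eq]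

lemma finrank_quotient_span_pair_pow [Finite ι] (hev : Function.Surjective ev) {u : R}
    (hker : RingHom.ker ev = Ideal.span {u}) (hreg : IsLeftRegular u) (f : R) (m : ℕ) :
    Module.finrank F (R ⧸ Ideal.span {f, u} ^ m) = m * {i | ev f i = 0}.ncard := by
  have coprime := isCoprime_ker_restrictEval_compl hev {i | ev f i = 0}
  have mul_eq := (Ideal.mul_eq_inf_of_isCoprime coprime).trans
    ((ker_restrictEval_inf_compl _).trans hker)
  rw [← ker_restrictEval_zeros hev hker, ← toNat_length_eq_finrank,
    length_quotient_pow F coprime mul_eq hreg, ENat.toNat_mul, toNat_length_eq_finrank,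
    finrank_quotient_ker_restrictEval hev, ENat.toNat_natCast]

end FiniteEvaluation

section FiniteField

open scoped Polynomial

variable {F : Type*} [Field F]

lemma prod_erase_sub_eq_eval_derivative [DecidableEq F] {p : F[X]} (hmonic : p.Monic)
    (hsplits : p.Splits) {s : Finset F} (hroots : p.roots = s.val) {b : F} (hb : b ∈ s) :
    ∏ c ∈ s.erase b, (b - c) = p.derivative.eval b := by
  rw [hsplits.eval_root_derivative hmonic (hroots ▸ hb), hroots]
  rfl

variable [Fintype F]

lemma monic_X_pow_card_sub_X : (Polynomial.X ^ Fintype.card F - Polynomial.X : F[X]).Monic :=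
  Polynomial.monic_X_pow_sub <| by
    rw [Polynomial.degree_X]
    exact_mod_cast Fintype.one_lt_card (α := F)

lemma splits_X_pow_card_sub_X : (Polynomial.X ^ Fintype.card F - Polynomial.X : F[X]).Splits := by
  rw [Polynomial.splits_iff_card_roots, FiniteField.roots_X_pow_card_sub_X,
    FiniteField.X_pow_card_sub_X_natDegree_eq F Fintype.one_lt_card]
  rfl

lemma X_pow_card_sub_X_dvd {p : F[X]} (hp : ∀ a, p.eval a = 0) :
    Polynomial.X ^ Fintype.card F - Polynomial.X ∣ p := by
  rcases eq_or_ne p 0 with rfl | hp0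
  · exact dvd_zero _
  · rw [splits_X_pow_card_sub_X.eq_prod_roots_of_monic monic_X_pow_card_sub_X,
      FiniteField.roots_X_pow_card_sub_X, Multiset.prod_X_sub_C_dvd_iff_le_roots hp0,
      Multiset.le_iff_subset Finset.univ.nodup]
    exact fun a _ => (Polynomial.mem_roots hp0).2 (hp a)

lemma prod_univ_erase_sub [DecidableEq F] (a : F) :
    ∏ c ∈ Finset.univ.erase a, (a - c) = -1 := by
  rw [prod_erase_sub_eq_eval_derivative monic_X_pow_card_sub_X splits_X_pow_card_sub_X
    (FiniteField.roots_X_pow_card_sub_X F) (Finset.mem_univ a)]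
  simp [Polynomial.derivative_X_pow]

end FiniteField

section Presentation

variable {k S T : Type*} [CommRing k] [CommRing S] [Algebra k S] [CommRing T] [Algebra k T]

lemma finrank_quotient_sup_ker {ψ : S →ₐ[k] T} (hψ : Function.Surjective ψ) (I : Ideal S) :
    Module.finrank k (S ⧸ I ⊔ RingHom.ker ψ) = Module.finrank k (T ⧸ I.map ψ) := by
  let proj : S →ₐ[k] T ⧸ I.map ψ := (Ideal.Quotient.mkₐ k (I.map ψ)).comp ψ
  have proj_surjective : Function.Surjective proj :=
    (Ideal.Quotient.mkₐ_surjective k _).comp hψ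
  have ker_proj : RingHom.ker proj = I ⊔ RingHom.ker ψ := by
    rw [← Ideal.comap_map_of_surjective' ψ hψ, ← AlgHom.comap_ker]
    exact congrArg (Ideal.comap ψ) (Ideal.Quotient.mkₐ_ker k _)
  rw [← ker_proj]
  exact (Ideal.quotientKerAlgEquivOfSurjective proj_surjective).toLinearEquiv.finrank_eq

/-- The substitution homomorphism replacing the last of `n + 1` variables by the polynomial `M` in
the others. -/
noncomputable def substLast {n : ℕ} (M : MvPolynomial (Fin n) k) :
    MvPolynomial (Fin (n + 1)) k →ₐ[k] MvPolynomial (Fin n) k :=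
  aeval (Fin.snoc X M)

variable {n : ℕ} (M : MvPolynomial (Fin n) k)

@[simp]
lemma substLast_X_castSucc (i : Fin n) : substLast M (X i.castSucc) = X i := by
  simp [substLast]

@[simp]
lemma substLast_X_last : substLast M (X (Fin.last n)) = M := by
  simp [substLast]

@[simp]
lemma substLast_rename_castSucc (N : MvPolynomial (Fin n) k) :
    substLast M (rename Fin.castSucc N) = N := by
  have comp_eq : (Fin.snoc X M : Fin (n + 1) → MvPolynomial (Fin n) k) ∘ Fin.castSucc = X :=
    funext fun i => by simp
  rw [substLast, aeval_rename, comp_eq, aeval_X_left_apply]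

lemma substLast_surjective : Function.Surjective (substLast M) := fun N =>
  ⟨rename Fin.castSucc N, substLast_rename_castSucc M N⟩

lemma ker_substLast :
    RingHom.ker (substLast M) = Ideal.span {X (Fin.last n) - rename Fin.castSucc M} := by
  set I := Ideal.span {X (Fin.last n) - rename Fin.castSucc M}
  have last_eq : Ideal.Quotient.mkₐ k I (X (Fin.last n)) =
      Ideal.Quotient.mkₐ k I (rename Fin.castSucc M) :=
    Ideal.Quotient.eq.2 (Ideal.mem_span_singleton_self _)
  have mk_rename_substLast : ((Ideal.Quotient.mkₐ k I).comp (rename Fin.castSucc)).comp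
      (substLast M) = Ideal.Quotient.mkₐ k I := by
    ext i
    induction i using Fin.lastCases with
    | last => simpa using last_eq.symm
    | cast i => simp
  refine le_antisymm (fun a ha => ?_) ((Ideal.span_singleton_le_iff_mem _).2 ?_)
  · have mk_eq := DFunLike.congr_fun mk_rename_substLast a
    rw [AlgHom.comp_apply, RingHom.mem_ker.1 ha, map_zero] at mk_eq
    exact Ideal.Quotient.eq_zero_iff_mem.1 mk_eq.symm
  · simp [RingHom.mem_ker]

lemma finrank_quotient_eliminate_last {φ : MvPolynomial (Fin n) k →ₐ[k] T}
    (hφ : Function.Surjective φ) {c : MvPolynomial (Fin n) k}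
    (hker : RingHom.ker φ = Ideal.span {c}) (H N : MvPolynomial (Fin n) k) (m : ℕ) :
    Module.finrank k (MvPolynomial (Fin (n + 1)) k ⧸
      (Ideal.span {rename Fin.castSucc c}
        + Ideal.span {X (Fin.last n) - rename Fin.castSucc H, rename Fin.castSucc N} ^ m
        + Ideal.span {X (Fin.last n) - rename Fin.castSucc M})) =
      Module.finrank k (T ⧸ Ideal.span {φ (M - H), φ N} ^ m) := by
  let ψ := φ.comp (substLast M)
  have hψ : Function.Surjective ψ := hφ.comp (substLast_surjective M)
  have ker_eq : RingHom.ker ψ = Ideal.span {rename Fin.castSucc c} ⊔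
      Ideal.span {X (Fin.last n) - rename Fin.castSucc M} := by
    rw [← AlgHom.comap_ker, hker, ← ker_substLast,
      ← Ideal.comap_map_of_surjective' _ (substLast_surjective M), Ideal.map_span,
      Set.image_singleton, substLast_rename_castSucc]
  have map_eq : (Ideal.span {X (Fin.last n) - rename Fin.castSucc H,
      rename Fin.castSucc N} ^ m).map ψ = Ideal.span {φ (M - H), φ N} ^ m := by
    simp [Ideal.map_pow, Ideal.map_span, Set.image_pair, ψ]
  rw [← map_eq, ← finrank_quotient_sup_ker hψ, ker_eq, sup_left_comm, ← sup_assoc]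
  rfl

end Presentation

section PlaneCurve

open scoped Polynomial Polynomial.Bivariate

variable {k ι : Type*} [CommRing k] (G : k[X][Y])

/-- The homomorphism from `k[X, Y]` onto the coordinate ring `k[X][Y] / (G)` of the plane affine
curve `G = 0`, realised as `AdjoinRoot G`. -/
noncomputable def coordMap : MvPolynomial (Fin 2) k →ₐ[k] AdjoinRoot G :=
  ((AdjoinRoot.mkₐ G).restrictScalars k).comp
    (Polynomial.Bivariate.equivMvPolynomial k).symm.toAlgHom

lemma coordMap_apply (N : MvPolynomial (Fin 2) k) :
    coordMap G N = AdjoinRoot.mk G ((Polynomial.Bivariate.equivMvPolynomial k).symm N) :=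
  rfl

lemma coordMap_surjective : Function.Surjective (coordMap G) :=
  AdjoinRoot.mk_surjective.comp (Polynomial.Bivariate.equivMvPolynomial k).symm.surjective

lemma ker_coordMap : RingHom.ker (coordMap G) =
    Ideal.span {Polynomial.Bivariate.equivMvPolynomial k G} := by
  ext N
  rw [RingHom.mem_ker, coordMap_apply, AdjoinRoot.mk_eq_zero, Ideal.mem_span_singleton,
    ← map_dvd_iff (Polynomial.Bivariate.equivMvPolynomial k), AlgEquiv.apply_symm_apply]

/-- The homomorphism from the coordinate ring of the curve `G = 0` to `k^ι` given by evaluation at a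
family `P` of points of the curve. -/
noncomputable def pointEval (P : ι → k × k) (hP : ∀ i, G.evalEval (P i).1 (P i).2 = 0) :
    AdjoinRoot G →ₐ[k] (ι → k) :=
  AlgHom.pi fun i => AdjoinRoot.liftAlgHom G (Polynomial.aeval (P i).1) (P i).2 <|
    (congrFun (Polynomial.eval₂_evalRingHom (P i).1) _ ▸ hP i :)

variable {G} {P : ι → k × k} {hP : ∀ i, G.evalEval (P i).1 (P i).2 = 0}

lemma pointEval_mk (r : k[X][Y]) (i : ι) :
    pointEval G P hP (AdjoinRoot.mk G r) i = r.evalEval (P i).1 (P i).2 :=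
  congrFun (congrFun (Polynomial.eval₂_evalRingHom _) _) r

lemma pointEval_coordMap (N : MvPolynomial (Fin 2) k) (i : ι) :
    pointEval G P hP (coordMap G N) i = eval ![(P i).1, (P i).2] N := by
  have comp_eq : ((Pi.evalAlgHom k (fun _ => k) i).comp (pointEval G P hP)).comp (coordMap G) =
      aeval ![(P i).1, (P i).2] := by
    ext j
    fin_cases j <;> simp [coordMap_apply, pointEval_mk, Polynomial.evalEval_C, -AdjoinRoot.mk_C,
      -AdjoinRoot.mk_X]
  simpa using DFunLike.congr_fun comp_eq N

lemma isLeftRegular_adjoinRoot_of [IsDomain k] (hG : G.Monic) {p : k[X]} (hp : p ≠ 0) :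
    IsLeftRegular (AdjoinRoot.of G p) := by
  have := hG.free_adjoinRoot
  intro x y hxy
  refine smul_right_injective (AdjoinRoot G) hp ?_
  simpa [Algebra.smul_def] using hxy

variable {F : Type*} [Field F] [Fintype F] {G : F[X][Y]} {P : ι → F × F}
  {hP : ∀ i, G.evalEval (P i).1 (P i).2 = 0}

lemma C_X_pow_card_sub_X_dvd_of_vanishing [DecidableEq F] {r : F[X][Y]}
    (hdeg : r.degree < G.degree)
    (hfiber : ∀ a, G.natDegree ≤ (Finset.univ.filter fun b => G.evalEval a b = 0).card)
    (hr : ∀ a b, G.evalEval a b = 0 → r.evalEval a b = 0) :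
    Polynomial.C (Polynomial.X ^ Fintype.card F - Polynomial.X) ∣ r := by
  refine (Polynomial.C_dvd_iff_dvd_coeff _ _).2 fun n => X_pow_card_sub_X_dvd fun a => ?_
  have map_eq_zero : r.map (Polynomial.evalRingHom a) = 0 := by
    refine Polynomial.eq_zero_of_degree_lt_of_eval_finset_eq_zero
      (Finset.univ.filter fun b => G.evalEval a b = 0) ?_ fun b hb => ?_
    · exact (Polynomial.degree_map_le.trans_lt hdeg).trans_le
        (Polynomial.degree_le_of_natDegree_le (hfiber a))
    rw [Polynomial.map_evalRingHom_eval]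
    exact hr a b (Finset.mem_filter.1 hb).2
  simpa using congrArg (Polynomial.coeff · n) map_eq_zero

lemma ker_pointEval [DecidableEq F] (hG : G.Monic)
    (hfiber : ∀ a, G.natDegree ≤ (Finset.univ.filter fun b => G.evalEval a b = 0).card)
    (hsurj : ∀ a b, G.evalEval a b = 0 → ∃ i, P i = (a, b)) :
    RingHom.ker (pointEval G P hP) =
      Ideal.span {AdjoinRoot.of G (Polynomial.X ^ Fintype.card F - Polynomial.X)} := by
  refine le_antisymm (fun x hx => ?_) (Ideal.span_singleton_le_iff_mem _ |>.2 ?_)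
  · obtain ⟨g, rfl⟩ := AdjoinRoot.mk_surjective x
    have mk_mod : AdjoinRoot.mk G (g %ₘ G) = AdjoinRoot.mk G g := by
      rw [← AdjoinRoot.modByMonicHom_mk hG, AdjoinRoot.mk_leftInverse hG]
    rw [← mk_mod] at hx ⊢
    refine Ideal.mem_span_singleton.2 (map_dvd (AdjoinRoot.mk G) <|
      C_X_pow_card_sub_X_dvd_of_vanishing (Polynomial.degree_modByMonic_lt g hG) hfiber
        fun a b hab => ?_)
    obtain ⟨i, hi⟩ := hsurj a b hab
    simpa [pointEval_mk, hi] using congrFun hx i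
  · rw [RingHom.mem_ker]
    ext i
    rw [AdjoinRoot.of, RingHom.comp_apply, pointEval_mk]
    simp [FiniteField.pow_card]

end PlaneCurve

section TracePolynomial

open scoped Polynomial

/-- The polynomial `Y ^ q + Y - c`. Over the field with `q ^ 2` elements, `Y ^ q + Y` is the trace
to the field with `q` elements. -/
noncomputable def tracePoly {S : Type*} [CommRing S] (q : ℕ) (c : S) : S[X] :=
  Polynomial.X ^ q + Polynomial.X - Polynomial.C c

section Degree

variable {S : Type*} [CommRing S] [Nontrivial S] {q : ℕ}

lemma degree_X_sub_C_lt_degree_X_pow (hq : 1 < q) (c : S) :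
    (Polynomial.X - Polynomial.C c).degree < (Polynomial.X ^ q : S[X]).degree := by
  rw [Polynomial.degree_X_sub_C, Polynomial.degree_X_pow]
  exact_mod_cast hq

lemma monic_tracePoly (hq : 1 < q) (c : S) : (tracePoly q c).Monic := by
  rw [tracePoly, add_sub_assoc]
  exact (Polynomial.monic_X_pow q).add_of_left (degree_X_sub_C_lt_degree_X_pow hq c)

lemma natDegree_tracePoly (hq : 1 < q) (c : S) : (tracePoly q c).natDegree = q := by
  rw [tracePoly, add_sub_assoc, Polynomial.natDegree_add_eq_left_of_degree_lt
    (degree_X_sub_C_lt_degree_X_pow hq c), Polynomial.natDegree_X_pow]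

end Degree

variable {F : Type*} [Field F] [Fintype F] {q : ℕ}

lemma one_lt_of_card_eq_sq (hF : Fintype.card F = q ^ 2) : 1 < q :=
  (one_lt_pow_iff two_ne_zero).1 (hF ▸ Fintype.one_lt_card)

lemma natCast_eq_zero_of_card_eq_sq (hF : Fintype.card F = q ^ 2) : (q : F) = 0 := by
  have sq_eq_zero : (q : F) ^ 2 = 0 := by rw [← Nat.cast_pow, ← hF, FiniteField.cast_card_eq_zero]
  exact eq_zero_of_pow_eq_zero sq_eq_zero

lemma exists_expChar_pow_of_dvd_card (hq : q ∣ Fintype.card F) :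
    ∃ p k : ℕ, ExpChar F p ∧ q = p ^ k := by
  obtain ⟨p, _, n, prime, card_eq⟩ := FiniteField.card' F
  obtain ⟨k, -, rfl⟩ := (Nat.dvd_prime_pow prime).1 (card_eq ▸ hq)
  exact ⟨p, k, .prime prime, rfl⟩

lemma tracePoly_dvd_X_pow_card_sub_X (hF : Fintype.card F = q ^ 2) {c : F} (hc : c ^ q = c) :
    tracePoly q c ∣ Polynomial.X ^ Fintype.card F - Polynomial.X := by
  have frobenius : tracePoly q c ^ q =
      Polynomial.X ^ Fintype.card F + Polynomial.X ^ q - Polynomial.C c := by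
    rw [hF, sq, pow_mul]
    obtain ⟨p, k, _, rfl⟩ := exists_expChar_pow_of_dvd_card (hF ▸ dvd_pow_self q two_ne_zero)
    rw [tracePoly, sub_pow_expChar_pow, add_pow_expChar_pow, ← Polynomial.C_pow, hc]
  have pow_sub_self : tracePoly q c ^ q - tracePoly q c =
      Polynomial.X ^ Fintype.card F - Polynomial.X := by
    rw [frobenius, tracePoly]
    ring
  rw [← pow_sub_self]
  exact dvd_sub_self_right.2 (dvd_pow_self _ (one_lt_of_card_eq_sq hF).ne_bot)

lemma splits_tracePoly (hF : Fintype.card F = q ^ 2) {c : F} (hc : c ^ q = c) :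
    (tracePoly q c).Splits :=
  splits_X_pow_card_sub_X.of_dvd monic_X_pow_card_sub_X.ne_zero
    (tracePoly_dvd_X_pow_card_sub_X hF hc)

lemma roots_tracePoly [DecidableEq F] (hF : Fintype.card F = q ^ 2) {c : F} (hc : c ^ q = c) :
    (tracePoly q c).roots = (Finset.univ.filter fun b => b ^ q + b = c).val := by
  have roots_le := Polynomial.roots.le_of_dvd monic_X_pow_card_sub_X.ne_zero
    (tracePoly_dvd_X_pow_card_sub_X hF hc)
  rw [FiniteField.roots_X_pow_card_sub_X] at roots_le
  refine (Multiset.Nodup.ext (Multiset.nodup_of_le roots_le Finset.univ.nodup)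
    (Finset.nodup _)).2 fun b => ?_
  rw [Polynomial.mem_roots (monic_tracePoly (one_lt_of_card_eq_sq hF) c).ne_zero]
  simp [tracePoly, sub_eq_zero]

lemma card_trace_fiber [DecidableEq F] (hF : Fintype.card F = q ^ 2) {c : F} (hc : c ^ q = c) :
    (Finset.univ.filter fun b : F => b ^ q + b = c).card = q := by
  rw [Finset.card_def, ← roots_tracePoly hF hc,
    ← (splits_tracePoly hF hc).natDegree_eq_card_roots,
    natDegree_tracePoly (one_lt_of_card_eq_sq hF)]

lemma trace_pow_eq_self (hF : Fintype.card F = q ^ 2) (b : F) :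
    (b ^ q + b) ^ q = b ^ q + b := by
  have pow_pow_eq : (b ^ q) ^ q = b := by rw [← pow_mul, ← sq, ← hF, FiniteField.pow_card]
  obtain ⟨p, k, _, rfl⟩ := exists_expChar_pow_of_dvd_card (hF ▸ dvd_pow_self q two_ne_zero)
  rw [add_pow_expChar_pow, pow_pow_eq, add_comm]

lemma norm_pow_eq_self (hF : Fintype.card F = q ^ 2) (a : F) :
    (a ^ (q + 1)) ^ q = a ^ (q + 1) := by
  rw [← pow_mul, add_one_mul, pow_add, ← sq, ← hF, FiniteField.pow_card, pow_succ']

lemma eval_derivative_tracePoly (hF : Fintype.card F = q ^ 2) (b c : F) :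
    (tracePoly q c).derivative.eval b = 1 := by
  simp [tracePoly, Polynomial.derivative_X_pow, natCast_eq_zero_of_card_eq_sq hF]

lemma prod_trace_fiber_erase_sub [DecidableEq F] (hF : Fintype.card F = q ^ 2) (b : F) :
    ∏ c ∈ (Finset.univ.filter fun c => c ^ q + c = b ^ q + b).erase b, (b - c) = 1 := by
  have trace_pow := trace_pow_eq_self hF b
  rw [prod_erase_sub_eq_eval_derivative (monic_tracePoly (one_lt_of_card_eq_sq hF) _)
    (splits_tracePoly hF trace_pow) (roots_tracePoly hF trace_pow) (by simp),
    eval_derivative_tracePoly hF]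

end TracePolynomial

section HermitianCurve

open scoped Polynomial Polynomial.Bivariate

variable {F : Type*} [Field F]

/-- The equation `Y ^ q + Y - X ^ (q + 1)` of the Hermitian curve, as a polynomial in `Y` over
`F[X]`. -/
noncomputable def hermitianPoly (q : ℕ) (F : Type*) [Field F] : F[X][Y] :=
  tracePoly q (Polynomial.X ^ (q + 1))

variable {q : ℕ}

lemma evalEval_hermitianPoly (a b : F) :
    (hermitianPoly q F).evalEval a b = b ^ q + b - a ^ (q + 1) := by
  simp [hermitianPoly, tracePoly, Polynomial.evalEval]

lemma evalEval_hermitianPoly_eq_zero {a b : F} :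
    (hermitianPoly q F).evalEval a b = 0 ↔ a ^ (q + 1) = b ^ q + b := by
  rw [evalEval_hermitianPoly, sub_eq_zero, eq_comm]

lemma ker_coordMap_hermitianPoly : RingHom.ker (coordMap (hermitianPoly q F)) =
    Ideal.span {X 0 ^ (q + 1) - X 1 ^ q - X 1} := by
  rw [ker_coordMap, ← Ideal.span_singleton_neg]
  congr 2
  simp only [hermitianPoly, tracePoly, map_sub, map_add, map_pow,
    Polynomial.Bivariate.equivMvPolynomial_X, Polynomial.Bivariate.equivMvPolynomial_C_X]
  ring

variable [Fintype F]

lemma card_hermitian_fiber [DecidableEq F] (hF : Fintype.card F = q ^ 2) (a : F) :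
    (Finset.univ.filter fun b => (hermitianPoly q F).evalEval a b = 0).card = q := by
  simp only [evalEval_hermitianPoly, sub_eq_zero]
  exact card_trace_fiber hF (norm_pow_eq_self hF a)

lemma eval_Hpoly_self [DecidableEq F] (hF : Fintype.card F = q ^ 2) (a b : F) :
    eval ![a, b] (Hpoly q a b) = 1 := by
  simp [Hpoly, prod_univ_erase_sub, prod_trace_fiber_erase_sub hF]

lemma eval_Hpoly_of_ne [DecidableEq F] {a b x y : F} (hab : a ^ (q + 1) = b ^ q + b)
    (hxy : x ^ (q + 1) = y ^ q + y) (hne : (a, b) ≠ (x, y)) :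
    eval ![x, y] (Hpoly q a b) = 0 := by
  rcases eq_or_ne x a with rfl | hx
  · have hy : y ≠ b := fun hy => hne (by rw [hy])
    have mem_fiber : y ∈ (Finset.univ.filter fun c => c ^ q + c = b ^ q + b).erase b := by
      simp [hy, ← hab, ← hxy]
    simp [Hpoly, Finset.prod_eq_zero mem_fiber (sub_self y)]
  · simp [Hpoly, Finset.prod_eq_zero (Finset.mem_erase.2 ⟨hx, Finset.mem_univ x⟩) (sub_self x)]

variable {ι : Type*} {P : ι → F × F}

lemma eval_sum_Hpoly [DecidableEq F] [Fintype ι] (hF : Fintype.card F = q ^ 2)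
    (hPinj : Function.Injective P) (hPcurve : ∀ i, (P i).1 ^ (q + 1) = (P i).2 ^ q + (P i).2)
    (v : ι → F) (j : ι) :
    eval ![(P j).1, (P j).2] (∑ i, C (v i) * Hpoly q (P i).1 (P i).2) = v j := by
  rw [map_sum, Fintype.sum_eq_single j fun i hij => ?_]
  · simp [eval_Hpoly_self hF]
  · rw [map_mul, eval_Hpoly_of_ne (hPcurve i) (hPcurve j) (hPinj.ne hij), mul_zero]

lemma pointEval_hermitian_surjective [Finite ι] (hF : Fintype.card F = q ^ 2)
    (hPinj : Function.Injective P)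
    (hP : ∀ i, (hermitianPoly q F).evalEval (P i).1 (P i).2 = 0) :
    Function.Surjective (pointEval (hermitianPoly q F) P hP) := by
  classical
  have := Fintype.ofFinite ι
  refine fun v => ⟨coordMap _ (∑ i, C (v i) * Hpoly q (P i).1 (P i).2), funext fun j => ?_⟩
  rw [pointEval_coordMap,
    eval_sum_Hpoly hF hPinj fun i => evalEval_hermitianPoly_eq_zero.1 (hP i)]

lemma finrank_quotient_hermitian [DecidableEq F] [Fintype ι] (hF : Fintype.card F = q ^ 2)
    (hPinj : Function.Injective P) (hPcurve : ∀ i, (P i).1 ^ (q + 1) = (P i).2 ^ q + (P i).2)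
    (hPsurj : ∀ a b : F, a ^ (q + 1) = b ^ q + b → ∃ i, P i = (a, b))
    (v : ι → F) (M : MvPolynomial (Fin 2) F) (m : ℕ) :
    Module.finrank F (AdjoinRoot (hermitianPoly q F) ⧸
      Ideal.span {coordMap (hermitianPoly q F) (M - ∑ i, C (v i) * Hpoly q (P i).1 (P i).2),
        coordMap (hermitianPoly q F) (X 0 ^ q ^ 2 - X 0)} ^ m) =
      m * {i | eval ![(P i).1, (P i).2] M = v i}.ncard := by
  have monic : (hermitianPoly q F).Monic := monic_tracePoly (one_lt_of_card_eq_sq hF) _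
  have hP i : (hermitianPoly q F).evalEval (P i).1 (P i).2 = 0 :=
    evalEval_hermitianPoly_eq_zero.2 (hPcurve i)
  have natDegree_le_fiber (a : F) : (hermitianPoly q F).natDegree ≤
      (Finset.univ.filter fun b => (hermitianPoly q F).evalEval a b = 0).card :=
    ((natDegree_tracePoly (one_lt_of_card_eq_sq hF) _).trans (card_hermitian_fiber hF a).symm).le
  have coordMap_eq : coordMap (hermitianPoly q F) (X 0 ^ q ^ 2 - X 0) =
      AdjoinRoot.of (hermitianPoly q F) (Polynomial.X ^ Fintype.card F - Polynomial.X) := by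
    simp [coordMap_apply, hF]
  rw [coordMap_eq, finrank_quotient_span_pair_pow
    (pointEval_hermitian_surjective hF hPinj hP)
    (ker_pointEval monic natDegree_le_fiber fun a b h =>
      hPsurj a b (evalEval_hermitianPoly_eq_zero.1 h))
    (isLeftRegular_adjoinRoot_of monic monic_X_pow_card_sub_X.ne_zero)]
  simp only [map_sub, Pi.sub_apply, pointEval_coordMap, eval_sum_Hpoly hF hPinj hPcurve,
    sub_eq_zero]

end HermitianCurve

/-- Let `m` be a positive integer, `v ∈ F^n`, and `M ∈ F[X,Y]` with residue class `μ` in `R`.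
Let `t = #{i : M(P_i) ≠ v_i}` (the Hamming distance between `v` and `ev(μ)`). Then the
`F`-vector space `F[X,Y,Z]/(⟨X^{q+1} − Y^q − Y⟩ + ⟨Z − H_v, X^{q²} − X⟩^m + ⟨Z − M⟩)` has
dimension `m(n − t)`. -/
theorem stmt_7 (q : ℕ) (hq : IsPrimePow q) (F : Type*) [Field F] [Fintype F] [DecidableEq F]
    (hF : Fintype.card F = q ^ 2)
    (m : ℕ) (hm : 1 ≤ m)
    (P : Fin (q ^ 3) → F × F)
    (hPinj : Function.Injective P)
    (hPcurve : ∀ i, (P i).1 ^ (q + 1) = (P i).2 ^ q + (P i).2)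
    (hPsurj : ∀ a b : F, a ^ (q + 1) = b ^ q + b → ∃ i, P i = (a, b))
    (v : Fin (q ^ 3) → F) (M : MvPolynomial (Fin 2) F) (t : ℕ)
    (ht : t = (Finset.univ.filter fun i : Fin (q ^ 3) =>
      MvPolynomial.eval ![(P i).1, (P i).2] M ≠ v i).card) :
    Module.finrank F (MvPolynomial (Fin 3) F ⧸
      (Ideal.span {(X 0 : MvPolynomial (Fin 3) F) ^ (q + 1) - X 1 ^ q - X 1}
        + (Ideal.span {X 2 - MvPolynomial.rename (Fin.castSucc : Fin 2 → Fin 3)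
              (∑ i, C (v i) * Hpoly q (P i).1 (P i).2),
            (X 0 : MvPolynomial (Fin 3) F) ^ (q ^ 2) - X 0}) ^ m
        + Ideal.span {X 2 - MvPolynomial.rename (Fin.castSucc : Fin 2 → Fin 3) M}))
      = m * (q ^ 3 - t) := by
  have curve_eq : rename Fin.castSucc (X 0 ^ (q + 1) - X 1 ^ q - X 1 : MvPolynomial (Fin 2) F) =
      (X 0 : MvPolynomial (Fin 3) F) ^ (q + 1) - X 1 ^ q - X 1 := by simp
  have field_eq : rename Fin.castSucc (X 0 ^ q ^ 2 - X 0 : MvPolynomial (Fin 2) F) =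
      (X 0 : MvPolynomial (Fin 3) F) ^ q ^ 2 - X 0 := by simp
  have agreements : {i | eval ![(P i).1, (P i).2] M = v i}.ncard = q ^ 3 - t := by
    have compl_eq : {i | eval ![(P i).1, (P i).2] M = v i} =
        (↑(Finset.univ.filter fun i => eval ![(P i).1, (P i).2] M ≠ v i)ᶜ : Set _) := by
      ext i
      simp
    rw [compl_eq, Set.ncard_coe_finset, Finset.card_compl, Fintype.card_fin, ht]
  rw [← agreements, ← finrank_quotient_hermitian hF hPinj hPcurve hPsurj,
    ← finrank_quotient_eliminate_last M (coordMap_surjective _) ker_coordMap_hermitianPoly,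
    curve_eq, field_eq]
  rfl
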